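/- Let n : ℕ, τ, θ : Fin n → ℝ, set φ = τ + θ, and let C ∈ GL_n(ℂ). Then the following are equivalent: (a) C commutes with the diagonal matrix exp(2πi·diag(τ)) and the function t ↦ D(t) ⬝ C ⬝ D(t)⁻¹ (for t ∈ (0,∞), where D(t) is the diagonal matrix with entries t^(φ i)) converges to a limit as t → 0⁺; (b) for all indices i, j with C i j ≠ 0, one has τ i − τ j ∈ ℤ and φ i ≥ φ j. In particular, (a) holds if and only if C commutes with exp(2πi·diag(τ)) and C ∈ P_φ. -/

import Mathlib

open Filter Topology Real

/-- The parabolic subgroup `P_φ ⊆ GL_n(ℂ)` attached to `φ : Fin n → ℝ`. -/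
def parabolicSet (n : ℕ) (φ : Fin n → ℝ) : Set ((Matrix (Fin n) (Fin n) ℂ)ˣ) :=
  {g | ∀ i j, φ i < φ j → g.val i j = 0}

theorem comm_iff_aux (n : ℕ) (τ : Fin n → ℝ) (C : Matrix (Fin n) (Fin n) ℂ) :
    (C * (Matrix.diagonal fun k => Complex.exp (2 * π * Complex.I * (τ k : ℂ))) =
      (Matrix.diagonal fun k => Complex.exp (2 * π * Complex.I * (τ k : ℂ))) * C) ↔
    ∀ i j, C i j ≠ 0 → ∃ m : ℤ, τ i - τ j = (m : ℝ) := by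
  have key : ∀ i j, (Complex.exp (2 * π * Complex.I * (τ i : ℂ)) =
      Complex.exp (2 * π * Complex.I * (τ j : ℂ))) ↔ ∃ m : ℤ, τ i - τ j = (m : ℝ) := by
    intro i j
    rw [Complex.exp_eq_exp_iff_exists_int]
    refine exists_congr fun m => ?_
    have h0 := Complex.two_pi_I_ne_zero
    constructor
    · intro h
      have h1 : (2 * π * Complex.I) * ((τ i : ℂ) - τ j) = (2 * π * Complex.I) * (m : ℂ) := by
        linear_combination h
      have h2 := mul_left_cancel₀ h0 h1
      exact_mod_cast h2
    · intro h
      have h2 : (τ i : ℂ) - τ j = (m : ℂ) := by exact_mod_cast congrArg (fun x : ℝ => (x : ℂ)) h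
      linear_combination (2 * π * Complex.I) * h2
  rw [← Matrix.ext_iff]
  refine forall_congr' fun i => forall_congr' fun j => ?_
  rw [Matrix.mul_diagonal, Matrix.diagonal_mul, ← key]
  constructor
  · intro h hC
    exact mul_right_cancel₀ hC (by rw [← h, mul_comm])
  · intro h
    by_cases hC : C i j = 0
    · simp [hC]
    · rw [h hC, mul_comm]

theorem lim_iff_aux (n : ℕ) (φ : Fin n → ℝ) (C : Matrix (Fin n) (Fin n) ℂ) :
    (∃ L : Matrix (Fin n) (Fin n) ℂ,
        Tendsto (fun t : ℝ => Matrix.of fun i j => ((t ^ (φ i - φ j) : ℝ) : ℂ) * C i j)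
          (nhdsWithin 0 (Set.Ioi 0)) (nhds L)) ↔
    ∀ i j, C i j ≠ 0 → φ j ≤ φ i := by
  constructor
  · rintro ⟨L, hL⟩ i j hC
    by_contra! hlt
    have h1 : Tendsto (fun t : ℝ => ((t ^ (φ i - φ j) : ℝ) : ℂ) * C i j)
        (nhdsWithin 0 (Set.Ioi 0)) (nhds (L i j)) :=
      (tendsto_pi_nhds.1 ((tendsto_pi_nhds.1 hL) i)) j
    have h2 := (h1.mul_const (C i j)⁻¹).norm
    have h3 : Tendsto (fun t : ℝ => t ^ (φ i - φ j)) (nhdsWithin 0 (Set.Ioi 0)) atTop :=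
      tendsto_rpow_neg_nhdsGT_zero (by linarith)
    refine not_tendsto_nhds_of_tendsto_atTop h3 _ (h2.congr' ?_)
    filter_upwards [self_mem_nhdsWithin] with t ht
    rw [mul_assoc, mul_inv_cancel₀ hC, mul_one, Complex.norm_real, Real.norm_eq_abs,
      abs_of_nonneg (Real.rpow_nonneg (le_of_lt ht) _)]
  · intro h
    refine ⟨Matrix.of fun i j => (((0 : ℝ) ^ (φ i - φ j) : ℝ) : ℂ) * C i j, ?_⟩
    refine tendsto_pi_nhds.2 fun i => tendsto_pi_nhds.2 fun j => ?_
    simp only [Matrix.of_apply]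
    by_cases hC : C i j = 0
    · simp [hC]
    · have h0 : 0 ≤ φ i - φ j := sub_nonneg.2 (h i j hC)
      have hc : Tendsto (fun t : ℝ => t ^ (φ i - φ j)) (nhdsWithin 0 (Set.Ioi 0))
          (nhds ((0 : ℝ) ^ (φ i - φ j))) :=
        (Real.continuous_rpow_const h0).continuousAt.tendsto.mono_left nhdsWithin_le_nhds
      exact ((Complex.continuous_ofReal.tendsto _).comp hc).mul_const _

/-- (Lemma 3.3 of the paper, for `GL_n(ℂ)`.) With `φ = τ + θ`:
`C` commutes with `exp(2πi·diag(τ))` and `t ↦ D(t) ⬝ C ⬝ D(t)⁻¹` (entries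
`t^(φ i − φ j) · C i j`) has a limit as `t → 0⁺`, if and only if every nonzero entry
`C i j` has `τ i − τ j ∈ ℤ` and `φ i ≥ φ j`; equivalently, iff `C` commutes with
`exp(2πi·diag(τ))` and `C ∈ P_φ`. -/
theorem parahoric_membership_criterion (n : ℕ) (τ θ : Fin n → ℝ)
    (φ : Fin n → ℝ) (hφ : φ = τ + θ)
    (E : Matrix (Fin n) (Fin n) ℂ)
    (hE : E = Matrix.diagonal fun k => Complex.exp (2 * π * Complex.I * (τ k : ℂ)))
    (C : (Matrix (Fin n) (Fin n) ℂ)ˣ) :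
    ((C.val * E = E * C.val ∧
      ∃ L : Matrix (Fin n) (Fin n) ℂ,
        Tendsto (fun t : ℝ => Matrix.of fun i j => ((t ^ (φ i - φ j) : ℝ) : ℂ) * C.val i j)
          (nhdsWithin 0 (Set.Ioi 0)) (nhds L)) ↔
      (∀ i j, C.val i j ≠ 0 → (∃ m : ℤ, τ i - τ j = (m : ℝ)) ∧ φ j ≤ φ i)) ∧
    ((C.val * E = E * C.val ∧
      ∃ L : Matrix (Fin n) (Fin n) ℂ,
        Tendsto (fun t : ℝ => Matrix.of fun i j => ((t ^ (φ i - φ j) : ℝ) : ℂ) * C.val i j)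
          (nhdsWithin 0 (Set.Ioi 0)) (nhds L)) ↔
      (C.val * E = E * C.val ∧ C ∈ parabolicSet n φ)) := by
  subst hE
  rw [comm_iff_aux, lim_iff_aux]
  refine ⟨⟨fun h i j hC => ⟨h.1 i j hC, h.2 i j hC⟩,
    fun h => ⟨fun i j hC => (h i j hC).1, fun i j hC => (h i j hC).2⟩⟩, and_congr_right fun _ => ?_⟩
  refine forall_congr' fun i => forall_congr' fun j => ?_
  rw [← not_lt, not_imp_not]
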